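/- For every element α of the submodule J_n ⊆ Θ_n generated by Jacobi combinations and symmetry combinations of Trees, and every β ∈ Γ_n, the configuration pairing vanishes: ⟨β, α⟩ = 0. -/

import Mathlib

open scoped Classical

noncomputable section

namespace GTPairing

/-- Planar binary trees with natural-number-labeled leaves.  A `PTree` is a rooted
binary (trivalent) tree embedded in the upper half plane; `node l r` has `l` as its
left branch and `r` as its right branch. -/
inductive PTree : Type
  | leaf (a : ℕ) : PTree
  | node (l r : PTree) : PTree
  deriving DecidableEq

namespace PTree

/-- The labels of the leaves, in planar (left-to-right) order. -/
def leaves : PTree → List ℕ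
  | .leaf a => [a]
  | .node l r => l.leaves ++ r.leaves

/-- The internal (trivalent) vertices of a planar tree, recorded as the subtrees they
support, listed in the left-to-right (in-order) planar order. -/
def nodesList : PTree → List PTree
  | .leaf _ => []
  | .node l r => l.nodesList ++ (PTree.node l r :: r.nodesList)

/-- `nadir t i j` is the nadir (lowest vertex) of the shortest path in `t` between the
leaves labeled `i` and `j`, recorded as the subtree it supports, together with `true`
if the leaf labeled `i` lies over the left branch of the nadir (and `j` over the
right), i.e. if the path travels from left to right at its nadir. -/
def nadir : PTree → ℕ → ℕ → Option (PTree × Bool)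
  | .leaf _, _, _ => none
  | .node l r, i, j =>
    if i ∈ l.leaves ∧ j ∈ r.leaves then some (.node l r, true)
    else if j ∈ l.leaves ∧ i ∈ r.leaves then some (.node l r, false)
    else if i ∈ l.leaves ∧ j ∈ l.leaves then nadir l i j
    else if i ∈ r.leaves ∧ j ∈ r.leaves then nadir r i j
    else none

/-- Fusing: `graft t m s` identifies the root edge of `s` with the leaf edge of `t`
labeled by `m`, i.e. substitutes `s` for the leaf labeled `m`. -/
def graft : PTree → ℕ → PTree → PTree
  | .leaf a, m, s => if a = m then s else .leaf a
  | .node l r, m, s => .node (l.graft m s) (r.graft m s)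

/-- Relabel the leaves of a tree. -/
def relabel (f : ℕ → ℕ) : PTree → PTree
  | .leaf a => .leaf (f a)
  | .node l r => .node (l.relabel f) (r.relabel f)

end PTree

/-- The nadir of the path between the two endpoints of an edge, forgetting planar
direction data. -/
def nadirFst (t : PTree) (e : ℕ × ℕ) : Option PTree := (t.nadir e.1 e.2).map Prod.fst

/-- The (even) configuration pairing between a set of oriented edges `E` (a Graph) and
a planar binary tree `t` (a Tree): it is `0` unless `e ↦ β_{G,T}(e)` (sending an edge
to the nadir of the path between the corresponding leaves) is a bijection from the
edges onto the internal vertices of `t`, in which case it is `(-1)^N` where `N` is the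
number of edges `(i,j)` whose path travels from left to right (`i` over the left
branch) at its nadir. -/
def pairPT (E : Multiset (ℕ × ℕ)) (t : PTree) : ℤ :=
  if E.map (nadirFst t) = ((t.nodesList.map some : List (Option PTree)) : Multiset (Option PTree))
  then (-1) ^ (Multiset.card (E.filter (fun e => (t.nadir e.1 e.2).map Prod.snd = some true)))
  else 0

/-- A Tree with leaves labeled bijectively by the finite set `S`. -/
def IsTreeOn (S : Finset ℕ) (t : PTree) : Prop := t.leaves.Nodup ∧ t.leaves.toFinset = S

def TreeOn (S : Finset ℕ) : Type := {t : PTree // IsTreeOn S t}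

/-- Adjacency relation determined by a multiset of oriented edges. -/
def Adj (E : Multiset (ℕ × ℕ)) (a b : ℕ) : Prop := (a, b) ∈ E ∨ (b, a) ∈ E

/-- Connectivity of an edge multiset on the vertex set `S`. -/
def ConnOn (S : Finset ℕ) (E : Multiset (ℕ × ℕ)) : Prop :=
  ∀ a ∈ S, ∀ b ∈ S, Relation.ReflTransGen (Adj E) a b

/-- A Graph on the vertex set `S`: a connected graph with oriented edges (each edge
joining two distinct vertices of `S`). -/
def IsGraphOn (S : Finset ℕ) (E : Multiset (ℕ × ℕ)) : Prop :=
  (∀ e ∈ E, e.1 ∈ S ∧ e.2 ∈ S ∧ e.1 ≠ e.2) ∧ ConnOn S E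

def GraphOn (S : Finset ℕ) : Type := {E : Multiset (ℕ × ℕ) // IsGraphOn S E}

variable (R : Type) [CommRing R]

/-- `Θ_S`: the free module on Trees with leaves labeled by `S`. -/
abbrev ThetaF (S : Finset ℕ) : Type := TreeOn S →₀ R

/-- `Γ_S`: the free module on Graphs with vertices labeled by `S`. -/
abbrev GammaF (S : Finset ℕ) : Type := GraphOn S →₀ R

variable {R}

/-- The configuration pairing, extended bilinearly to the free modules. -/
def pairGT {S : Finset ℕ} (β : GammaF R S) (α : ThetaF R S) : R :=
  β.sum fun G b => α.sum fun T a => b * a * ((pairPT G.1 T.1 : ℤ) : R)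

/-- The basis element of a free module on a subtype, when the defining property holds
(and `0` otherwise; in all uses below the property does hold). -/
def bsingle {α : Type} (P : α → Prop) (a : α) : ({x : α // P x} →₀ R) :=
  if h : P a then Finsupp.single ⟨a, h⟩ (1 : R) else 0

variable (R)

/-- Jacobi combinations of Trees: the sum of the three Trees obtained from the unique
3-leaf Tree by fusing Trees `A`, `B`, `C` onto its three leaves in the three
cyclically related orders and fusing a Tree `D` onto its root (at the leaf `m` of `D`). -/
def jacobiSet (S : Finset ℕ) : Set (ThetaF R S) :=
  { x | ∃ (D A B C : PTree) (m : ℕ) (T₁ T₂ T₃ : TreeOn S),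
      D.leaves.Nodup ∧ m ∈ D.leaves ∧
      T₁.1 = D.graft m (.node (.node A B) C) ∧
      T₂.1 = D.graft m (.node (.node B C) A) ∧
      T₃.1 = D.graft m (.node (.node C A) B) ∧
      x = Finsupp.single T₁ 1 + Finsupp.single T₂ 1 + Finsupp.single T₃ 1 }

/-- Symmetry combinations of Trees: the sum of two Trees which are isomorphic as
labeled graphs and have the same planar ordering of input edges at every internal
vertex except exactly one (here: exactly the vertex at the leaf `m` of `D`, whose two
branches `A` and `B` are switched). -/
def treeSymmSet (S : Finset ℕ) : Set (ThetaF R S) :=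
  { x | ∃ (D A B : PTree) (m : ℕ) (T₁ T₂ : TreeOn S),
      D.leaves.Nodup ∧ m ∈ D.leaves ∧
      T₁.1 = D.graft m (.node A B) ∧
      T₂.1 = D.graft m (.node B A) ∧
      x = Finsupp.single T₁ 1 + Finsupp.single T₂ 1 }

/-- The submodule `J_S ⊆ Θ_S` generated by Jacobi and symmetry combinations. -/
def Jsub (S : Finset ℕ) : Submodule R (ThetaF R S) :=
  Submodule.span R (jacobiSet R S ∪ treeSymmSet R S)

/-- Arnold combinations of Graphs: sums of three Graphs which agree except on edges
among three fixed distinct vertices `i`, `j`, `k`, where they contain respectively the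
edge pairs `{i→j, j→k}`, `{j→k, k→i}` and `{k→i, i→j}`. -/
def arnoldSet (S : Finset ℕ) : Set (GammaF R S) :=
  { x | ∃ (i j k : ℕ) (E₀ : Multiset (ℕ × ℕ)) (G₁ G₂ G₃ : GraphOn S),
      i ≠ j ∧ j ≠ k ∧ i ≠ k ∧
      G₁.1 = (i, j) ::ₘ (j, k) ::ₘ E₀ ∧
      G₂.1 = (j, k) ::ₘ (k, i) ::ₘ E₀ ∧
      G₃.1 = (k, i) ::ₘ (i, j) ::ₘ E₀ ∧
      x = Finsupp.single G₁ 1 + Finsupp.single G₂ 1 + Finsupp.single G₃ 1 }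

/-- Symmetry combinations of Graphs: sums of two Graphs which differ only in the
orientation of exactly one edge. -/
def graphSymmSet (S : Finset ℕ) : Set (GammaF R S) :=
  { x | ∃ (i j : ℕ) (E₀ : Multiset (ℕ × ℕ)) (G₁ G₂ : GraphOn S),
      G₁.1 = (i, j) ::ₘ E₀ ∧ G₂.1 = (j, i) ::ₘ E₀ ∧
      x = Finsupp.single G₁ 1 + Finsupp.single G₂ 1 }

/-- Graphs having two edges with the same pair of endpoints. -/
def doubledSet (S : Finset ℕ) : Set (GammaF R S) :=
  { x | ∃ (i j : ℕ) (E₀ : Multiset (ℕ × ℕ)) (G : GraphOn S),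
      (G.1 = (i, j) ::ₘ (i, j) ::ₘ E₀ ∨ G.1 = (i, j) ::ₘ (j, i) ::ₘ E₀) ∧
      x = Finsupp.single G 1 }

/-- The submodule `I_S ⊆ Γ_S` generated by Arnold combinations, symmetry combinations
and Graphs with doubled edges. -/
def Isub (S : Finset ℕ) : Submodule R (GammaF R S) :=
  Submodule.span R (arnoldSet R S ∪ graphSymmSet R S ∪ doubledSet R S)

/-- `Lie(S) = Θ_S / J_S`. -/
abbrev LieQ (S : Finset ℕ) : Type := ThetaF R S ⧸ Jsub R S

/-- `Eil(S) = Γ_S / I_S`. -/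
abbrev EilQ (S : Finset ℕ) : Type := GammaF R S ⧸ Isub R S

end GTPairing

namespace GTPairing

/-!
Call the signed number of edges of `E` running between the two branches of an internal vertex the
*signed crossing number* of `E` there. A map between finite sets of the same size which is not
bijective misses a point, where the signed crossing number is then zero. Hence the pairing of `E`
with a tree on `S` is the product over all internal vertices of the signed crossing numbers if
`|E| + 1 = |S|`, and zero otherwise. Fusing into a fixed tree multiplies such a product by a factor
depending only on the leaves of the fused tree, so the symmetry relation reduces to the antisymmetry
of the signed crossing number `s` in the two branches, and the Jacobi relation to
`(q - r) p + (r - p) q + (p - q) r = 0` with `p = s(A, B)`, `q = s(B, C)`, `r = s(C, A)`.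
-/

section SignedCrossings

variable {V : Type*} [DecidableEq V]

/-- The sign of an oriented edge between two branches with lists of leaves `L` (left) and `M`
(right): `-1` from left to right, `1` from right to left, `0` if the edge does not join the
branches. Multiplicities, rather than membership, make it bilinear in `L` and `M` without any
disjointness condition. -/
def crossingSign (L M : List V) (e : V × V) : ℤ :=
  L.count e.2 * M.count e.1 - L.count e.1 * M.count e.2

/-- The signed number of edges of `E` joining two branches with lists of leaves `L` and `M`. -/
def signedCrossings (E : Multiset (V × V)) (L M : List V) : ℤ :=
  (E.map (crossingSign L M)).sum

theorem crossingSign_eq_ite {L M : List V} (hL : L.Nodup) (hM : M.Nodup) (e : V × V) :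
    crossingSign L M e =
      (if e.2 ∈ L ∧ e.1 ∈ M then 1 else 0) - (if e.1 ∈ L ∧ e.2 ∈ M then 1 else 0) := by
  simp only [crossingSign, hL.count, hM.count, Nat.cast_ite, Nat.cast_one, Nat.cast_zero,
    ite_and, ite_mul, one_mul, zero_mul]

theorem signedCrossings_swap (E : Multiset (V × V)) (L M : List V) :
    signedCrossings E M L = -signedCrossings E L M := by
  rw [signedCrossings, signedCrossings, ← Multiset.sum_map_neg]
  refine congrArg Multiset.sum (Multiset.map_congr rfl fun e _ => ?_)
  rw [crossingSign, crossingSign]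
  ring

theorem signedCrossings_append_left (E : Multiset (V × V)) (L L' M : List V) :
    signedCrossings E (L ++ L') M = signedCrossings E L M + signedCrossings E L' M := by
  rw [signedCrossings, signedCrossings, signedCrossings, ← Multiset.sum_map_add]
  refine congrArg Multiset.sum (Multiset.map_congr rfl fun e _ => ?_)
  simp only [crossingSign, List.count_append]
  push_cast
  ring

theorem signedCrossings_congr_perm (E : Multiset (V × V)) {L L' M M' : List V}
    (hL : L.Perm L') (hM : M.Perm M') : signedCrossings E L M = signedCrossings E L' M' := by
  refine congrArg Multiset.sum (Multiset.map_congr rfl fun e _ => ?_)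
  simp only [crossingSign, hL.count_eq, hM.count_eq]

theorem signedCrossings_jacobi (E : Multiset (V × V)) (A B C : List V) :
    signedCrossings E (A ++ B) C * signedCrossings E A B +
      signedCrossings E (B ++ C) A * signedCrossings E B C +
      signedCrossings E (C ++ A) B * signedCrossings E C A = 0 := by
  simp only [signedCrossings_append_left]
  rw [signedCrossings_swap E C A, signedCrossings_swap E A B, signedCrossings_swap E B C]
  ring

end SignedCrossings

namespace PTree

theorem leaves_ne_nil : ∀ t : PTree, t.leaves ≠ []
  | leaf _ => List.cons_ne_nil _ _
  | node l _ => List.append_ne_nil_of_left_ne_nil l.leaves_ne_nil _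

theorem length_nodesList_add_one : ∀ t : PTree, t.nodesList.length + 1 = t.leaves.length
  | leaf _ => rfl
  | node l r => by
    have hl := l.length_nodesList_add_one
    have hr := r.length_nodesList_add_one
    simp only [nodesList, leaves, List.length_append, List.length_cons]
    omega

theorem nodup_leaves_node {l r : PTree} :
    (node l r).leaves.Nodup ↔
      l.leaves.Nodup ∧ r.leaves.Nodup ∧ l.leaves.Disjoint r.leaves :=
  List.nodup_append'

theorem leaves_sublist_of_mem_nodesList {t v : PTree} (hv : v ∈ t.nodesList) :
    v.leaves.Sublist t.leaves := by
  induction t with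
  | leaf a => exact absurd hv List.not_mem_nil
  | node l r ihl ihr =>
    simp only [nodesList, List.mem_append, List.mem_cons] at hv
    rcases hv with hv | rfl | hv
    · exact (ihl hv).trans (List.sublist_append_left _ _)
    · exact List.Sublist.refl _
    · exact (ihr hv).trans (List.sublist_append_right _ _)

theorem node_notMem_nodesList_left (l r : PTree) : node l r ∉ l.nodesList := fun h => by
  have hlen := (leaves_sublist_of_mem_nodesList h).length_le
  have hr := List.length_pos_iff.2 r.leaves_ne_nil
  rw [leaves, List.length_append] at hlen
  omega

theorem node_notMem_nodesList_right (l r : PTree) : node l r ∉ r.nodesList := fun h => by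
  have hlen := (leaves_sublist_of_mem_nodesList h).length_le
  have hl := List.length_pos_iff.2 l.leaves_ne_nil
  rw [leaves, List.length_append] at hlen
  omega

theorem disjoint_nodesList {l r : PTree} (h : l.leaves.Disjoint r.leaves) :
    l.nodesList.Disjoint r.nodesList := fun v hl hr => by
  obtain ⟨a, ha⟩ := List.exists_mem_of_ne_nil _ v.leaves_ne_nil
  exact h ((leaves_sublist_of_mem_nodesList hl).subset ha)
    ((leaves_sublist_of_mem_nodesList hr).subset ha)

theorem nodup_nodesList {t : PTree} (ht : t.leaves.Nodup) : t.nodesList.Nodup := by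
  induction t with
  | leaf a => exact List.nodup_nil
  | node l r ihl ihr =>
    obtain ⟨hl, hr, hd⟩ := nodup_leaves_node.1 ht
    refine List.nodup_append'.2 ⟨ihl hl, List.nodup_cons.2 ⟨?_, ihr hr⟩, ?_⟩
    · exact node_notMem_nodesList_right l r
    · exact List.disjoint_cons_right.2 ⟨node_notMem_nodesList_left l r, disjoint_nodesList hd⟩

theorem mem_leaves_of_nadir_eq_some {t : PTree} {i j : ℕ} {p : PTree × Bool}
    (h : t.nadir i j = some p) : i ∈ t.leaves ∧ j ∈ t.leaves := by
  cases t with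
  | leaf a => exact absurd h (Option.some_ne_none p).symm
  | node l r =>
    simp only [leaves, List.mem_append]
    rw [nadir] at h
    split_ifs at h <;> tauto

theorem nadir_node_of_mem_left {l r : PTree} (hd : l.leaves.Disjoint r.leaves) {i j : ℕ}
    (hi : i ∈ l.leaves) (hj : j ∈ l.leaves) : (node l r).nadir i j = l.nadir i j := by
  have hi' : i ∉ r.leaves := hd hi
  have hj' : j ∉ r.leaves := hd hj
  simp [nadir, hi, hj, hi', hj']

theorem nadir_node_of_mem_right {l r : PTree} (hd : l.leaves.Disjoint r.leaves) {i j : ℕ}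
    (hi : i ∈ r.leaves) (hj : j ∈ r.leaves) : (node l r).nadir i j = r.nadir i j := by
  have hi' : i ∉ l.leaves := hd.symm hi
  have hj' : j ∉ l.leaves := hd.symm hj
  simp [nadir, hi, hj, hi', hj']

theorem nadir_eq_some_iff {t : PTree} (ht : t.leaves.Nodup) {i j : ℕ} {v : PTree} {b : Bool} :
    t.nadir i j = some (v, b) ↔ v ∈ t.nodesList ∧ v.nadir i j = some (v, b) := by
  induction t with
  | leaf a => simp [nadir, nodesList]
  | node l r ihl ihr =>
    obtain ⟨hl, hr, hd⟩ := nodup_leaves_node.1 ht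
    simp only [nodesList, List.mem_append, List.mem_cons]
    constructor
    · intro h
      have h_root := h
      rw [nadir] at h
      split_ifs at h
      · obtain ⟨rfl, -⟩ := Prod.mk.inj (Option.some.inj h)
        exact ⟨.inr (.inl rfl), h_root⟩
      · obtain ⟨rfl, -⟩ := Prod.mk.inj (Option.some.inj h)
        exact ⟨.inr (.inl rfl), h_root⟩
      · exact ((ihl hl).1 h).imp_left .inl
      · exact ((ihr hr).1 h).imp_left fun hv => .inr (.inr hv)
    · rintro ⟨hv | rfl | hv, h⟩
      · have hsub := (leaves_sublist_of_mem_nodesList hv).subset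
        obtain ⟨hi, hj⟩ := mem_leaves_of_nadir_eq_some h
        exact (nadir_node_of_mem_left hd (hsub hi) (hsub hj)).trans ((ihl hl).2 ⟨hv, h⟩)
      · exact h
      · have hsub := (leaves_sublist_of_mem_nodesList hv).subset
        obtain ⟨hi, hj⟩ := mem_leaves_of_nadir_eq_some h
        exact (nadir_node_of_mem_right hd (hsub hi) (hsub hj)).trans ((ihr hr).2 ⟨hv, h⟩)

theorem nadir_node_eq_self_iff {l r : PTree} (h : (node l r).leaves.Nodup) {i j : ℕ} {b : Bool} :
    (node l r).nadir i j = some (node l r, b) ↔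
      if b then i ∈ l.leaves ∧ j ∈ r.leaves else j ∈ l.leaves ∧ i ∈ r.leaves := by
  obtain ⟨hl, hr, hd⟩ := nodup_leaves_node.1 h
  have hl_ne : l.nadir i j ≠ some (node l r, b) := fun hn =>
    node_notMem_nodesList_left l r ((nadir_eq_some_iff hl).1 hn).1
  have hr_ne : r.nadir i j ≠ some (node l r, b) := fun hn =>
    node_notMem_nodesList_right l r ((nadir_eq_some_iff hr).1 hn).1
  have hi := @hd i
  have hj := @hd j
  rw [nadir]
  cases b <;> split_ifs <;> simp_all

/-- The sign of an edge at the vertex supporting the subtree `v`; it is zero by convention if `v`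
is a leaf. -/
def vertexSign : PTree → ℕ × ℕ → ℤ
  | leaf _, _ => 0
  | node l r, e => crossingSign l.leaves r.leaves e

theorem vertexSign_of_nadir_eq {t v : PTree} (ht : t.leaves.Nodup) {e : ℕ × ℕ} {b : Bool}
    (h : t.nadir e.1 e.2 = some (v, b)) : v.vertexSign e = if b then -1 else 1 := by
  obtain ⟨hv, hself⟩ := (nadir_eq_some_iff ht).1 h
  cases v with
  | leaf a => exact absurd hself (Option.some_ne_none _).symm
  | node l r =>
    have hnodup := (leaves_sublist_of_mem_nodesList hv).nodup ht
    obtain ⟨hl, hr, hd⟩ := nodup_leaves_node.1 hnodup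
    have hside := (nadir_node_eq_self_iff hnodup).1 hself
    have h1 := @hd e.1
    have h2 := @hd e.2
    rw [vertexSign, crossingSign_eq_ite hl hr]
    cases b <;> simp_all

theorem vertexSign_of_nadirFst_ne {t v : PTree} (ht : t.leaves.Nodup) (hv : v ∈ t.nodesList)
    {e : ℕ × ℕ} (h : nadirFst t e ≠ some v) : v.vertexSign e = 0 := by
  have hne (b : Bool) : v.nadir e.1 e.2 ≠ some (v, b) := fun hn =>
    h (congrArg (Option.map Prod.fst) ((nadir_eq_some_iff ht).2 ⟨hv, hn⟩))
  cases v with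
  | leaf a => rfl
  | node l r =>
    have hnodup := (leaves_sublist_of_mem_nodesList hv).nodup ht
    obtain ⟨hl, hr, -⟩ := nodup_leaves_node.1 hnodup
    have h_left_right : ¬(e.1 ∈ l.leaves ∧ e.2 ∈ r.leaves) :=
      mt (nadir_node_eq_self_iff hnodup (b := true)).2 (hne true)
    have h_right_left : ¬(e.2 ∈ l.leaves ∧ e.1 ∈ r.leaves) :=
      mt (nadir_node_eq_self_iff hnodup (b := false)).2 (hne false)
    rw [vertexSign, crossingSign_eq_ite hl hr, if_neg h_left_right, if_neg h_right_left, sub_zero]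

/-- The product over all internal vertices of `t` of the signed number of edges of `E` joining the
two branches at that vertex. -/
def crossingProd (E : Multiset (ℕ × ℕ)) (t : PTree) : ℤ :=
  (t.nodesList.map fun v => (E.map v.vertexSign).sum).prod

theorem crossingProd_node (E : Multiset (ℕ × ℕ)) (l r : PTree) :
    crossingProd E (node l r) =
      signedCrossings E l.leaves r.leaves * crossingProd E l * crossingProd E r := by
  simp only [crossingProd, nodesList, List.map_append, List.map_cons, List.prod_append,
    List.prod_cons, signedCrossings]
  rw [mul_left_comm, ← mul_assoc]
  rfl

theorem crossingProd_node_swap (E : Multiset (ℕ × ℕ)) (A B : PTree) :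
    crossingProd E (node B A) = -crossingProd E (node A B) := by
  rw [crossingProd_node, crossingProd_node, signedCrossings_swap]
  ring

theorem crossingProd_jacobi (E : Multiset (ℕ × ℕ)) (A B C : PTree) :
    crossingProd E (node (node A B) C) + crossingProd E (node (node B C) A) +
      crossingProd E (node (node C A) B) = 0 := by
  simp only [crossingProd_node, leaves]
  linear_combination (crossingProd E A * crossingProd E B * crossingProd E C) *
    signedCrossings_jacobi E A.leaves B.leaves C.leaves

theorem graft_of_notMem_leaves {D : PTree} {m : ℕ} (s : PTree) (h : m ∉ D.leaves) :
    D.graft m s = D := by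
  induction D with
  | leaf a => exact if_neg fun ha => h (List.mem_singleton.2 ha.symm)
  | node l r ihl ihr =>
    rw [leaves, List.mem_append, not_or] at h
    rw [graft, ihl h.1, ihr h.2]

theorem leaves_graft_perm (D : PTree) (m : ℕ) {s s' : PTree} (h : s.leaves.Perm s'.leaves) :
    (D.graft m s).leaves.Perm (D.graft m s').leaves := by
  induction D with
  | leaf a =>
    rw [graft, graft]
    split_ifs
    · exact h
    · exact List.Perm.refl _
  | node l r ihl ihr => exact ihl.append ihr

theorem exists_crossingProd_graft_eq_mul (E : Multiset (ℕ × ℕ)) {D : PTree} {m : ℕ}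
    (hD : D.leaves.Nodup) (hm : m ∈ D.leaves) (s₀ : PTree) :
    ∃ c : ℤ, ∀ s : PTree, s.leaves.Perm s₀.leaves →
      crossingProd E (D.graft m s) = c * crossingProd E s := by
  induction D with
  | leaf a =>
    obtain rfl := List.mem_singleton.1 hm
    exact ⟨1, fun s _ => by rw [graft, if_pos rfl, one_mul]⟩
  | node l r ihl ihr =>
    obtain ⟨hl, hr, hd⟩ := nodup_leaves_node.1 hD
    rcases List.mem_append.1 hm with hml | hmr
    · obtain ⟨c, hc⟩ := ihl hl hml
      refine ⟨signedCrossings E (l.graft m s₀).leaves r.leaves * c * crossingProd E r,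
        fun s hs => ?_⟩
      rw [graft, graft_of_notMem_leaves s (hd hml), crossingProd_node, hc s hs,
        signedCrossings_congr_perm E (leaves_graft_perm l m hs) (.refl _)]
      ring
    · obtain ⟨c, hc⟩ := ihr hr hmr
      refine ⟨signedCrossings E l.leaves (r.graft m s₀).leaves * crossingProd E l * c,
        fun s hs => ?_⟩
      rw [graft, graft_of_notMem_leaves s (hd.symm hmr), crossingProd_node, hc s hs,
        signedCrossings_congr_perm E (.refl _) (leaves_graft_perm r m hs)]
      ring

/-- The sign of an edge at the nadir of its path in `t`. -/
def nadirSign (t : PTree) (e : ℕ × ℕ) : ℤ :=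
  if (t.nadir e.1 e.2).map Prod.snd = some true then -1 else 1

theorem prod_map_nadirSign (E : Multiset (ℕ × ℕ)) (t : PTree) :
    (E.map t.nadirSign).prod =
      (-1) ^ (E.filter fun e => (t.nadir e.1 e.2).map Prod.snd = some true).card := by
  induction E using Multiset.induction_on with
  | empty => rfl
  | cons e E ih =>
    rw [Multiset.map_cons, Multiset.prod_cons, ih, nadirSign]
    split_ifs with h
    · rw [Multiset.filter_cons_of_pos E h, Multiset.card_cons, pow_succ']
    · rw [Multiset.filter_cons_of_neg E h, one_mul]

theorem sum_vertexSign_of_nodup {t v : PTree} (ht : t.leaves.Nodup) {E : Multiset (ℕ × ℕ)}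
    (hE : (E.map (nadirFst t)).Nodup) {e : ℕ × ℕ} (he : e ∈ E) (hv : nadirFst t e = some v) :
    (E.map v.vertexSign).sum = t.nadirSign e := by
  obtain ⟨E, rfl⟩ := Multiset.exists_cons_of_mem he
  obtain ⟨⟨v, b⟩, hb, rfl⟩ := Option.map_eq_some_iff.1 hv
  rw [Multiset.map_cons, Multiset.nodup_cons, hv] at hE
  have hrest : ∀ x ∈ E.map v.vertexSign, x = 0 := by
    simp only [Multiset.mem_map]
    rintro _ ⟨e', he', rfl⟩
    exact vertexSign_of_nadirFst_ne ht ((nadir_eq_some_iff ht).1 hb).1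
      fun h => hE.1 (h ▸ Multiset.mem_map_of_mem _ he')
  rw [Multiset.map_cons, Multiset.sum_cons, Multiset.sum_eq_zero hrest, add_zero,
    vertexSign_of_nadir_eq ht hb, nadirSign, hb]
  simp only [Option.map_some, Option.some.injEq]

theorem crossingProd_of_map_nadirFst_eq {t : PTree} (ht : t.leaves.Nodup)
    {E : Multiset (ℕ × ℕ)} (hE : E.map (nadirFst t) = (t.nodesList.map some : List _)) :
    crossingProd E t = (E.map t.nadirSign).prod := by
  have hnodup : (E.map (nadirFst t)).Nodup := by
    rw [hE, Multiset.coe_nodup]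
    exact (nodup_nodesList ht).map (Option.some_injective _)
  let f : Option PTree → ℤ := fun o => o.elim 1 fun v => (E.map v.vertexSign).sum
  calc crossingProd E t = ((E.map (nadirFst t)).map f).prod := by
        rw [hE, Multiset.map_coe, Multiset.prod_coe, List.map_map]
        rfl
    _ = (E.map fun e => f (nadirFst t e)).prod := by rw [Multiset.map_map]; rfl
    _ = (E.map t.nadirSign).prod := by
        congr 1
        refine Multiset.map_congr rfl fun e he => ?_
        have hmem : nadirFst t e ∈ t.nodesList.map some := by
          rw [← Multiset.mem_coe, ← hE]
          exact Multiset.mem_map_of_mem _ he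
        obtain ⟨v, -, hv⟩ := List.mem_map.1 hmem
        rw [← hv]
        exact sum_vertexSign_of_nodup ht hnodup he hv.symm

theorem crossingProd_eq_zero_of_map_nadirFst_ne {t : PTree} (ht : t.leaves.Nodup)
    {E : Multiset (ℕ × ℕ)} (hcard : E.card = t.nodesList.length)
    (hE : E.map (nadirFst t) ≠ (t.nodesList.map some : List _)) : crossingProd E t = 0 := by
  obtain ⟨v, hv, hmiss⟩ : ∃ v ∈ t.nodesList, some v ∉ E.map (nadirFst t) := by
    by_contra! hall
    refine hE (Multiset.eq_of_le_of_card_le ?_ ?_).symm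
    · refine (Multiset.le_iff_subset ?_).2 fun o ho => ?_
      · exact (nodup_nodesList ht).map (Option.some_injective _)
      · obtain ⟨v, hv, rfl⟩ := List.mem_map.1 (Multiset.mem_coe.1 ho)
        exact hall v hv
    · rw [Multiset.card_map, hcard, Multiset.coe_card, List.length_map]
  refine List.prod_eq_zero (List.mem_map.2 ⟨v, hv, Multiset.sum_eq_zero ?_⟩)
  simp only [Multiset.mem_map]
  rintro _ ⟨e, he, rfl⟩
  exact vertexSign_of_nadirFst_ne ht hv fun h => hmiss (h ▸ Multiset.mem_map_of_mem _ he)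

end PTree

open PTree

theorem pairPT_eq_ite_crossingProd {t : PTree} (ht : t.leaves.Nodup) (E : Multiset (ℕ × ℕ)) :
    pairPT E t = if E.card = t.nodesList.length then crossingProd E t else 0 := by
  rw [pairPT]
  split_ifs with hE hcard hcard
  · rw [crossingProd_of_map_nadirFst_eq ht hE, prod_map_nadirSign]
  · refine absurd ?_ hcard
    simpa only [Multiset.card_map, Multiset.coe_card, List.length_map] using
      congrArg Multiset.card hE
  · exact (crossingProd_eq_zero_of_map_nadirFst_ne ht hcard hE).symm
  · rfl

section Relations

variable {S : Finset ℕ}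

theorem TreeOn.pairPT_eq_ite (T : TreeOn S) (E : Multiset (ℕ × ℕ)) :
    pairPT E T.1 = if E.card + 1 = S.card then crossingProd E T.1 else 0 := by
  obtain ⟨t, hnodup, rfl⟩ := T
  rw [pairPT_eq_ite_crossingProd hnodup, List.toFinset_card_of_nodup hnodup,
    ← length_nodesList_add_one]
  simp only [Nat.add_right_cancel_iff]

theorem pairPT_graft_jacobi (E : Multiset (ℕ × ℕ)) {D A B C : PTree} {m : ℕ}
    {T₁ T₂ T₃ : TreeOn S} (hD : D.leaves.Nodup) (hm : m ∈ D.leaves)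
    (h₁ : T₁.1 = D.graft m (.node (.node A B) C)) (h₂ : T₂.1 = D.graft m (.node (.node B C) A))
    (h₃ : T₃.1 = D.graft m (.node (.node C A) B)) :
    pairPT E T₁.1 + pairPT E T₂.1 + pairPT E T₃.1 = 0 := by
  obtain ⟨c, hc⟩ := exists_crossingProd_graft_eq_mul E hD hm (.node (.node A B) C)
  have hBCA : (PTree.node (.node B C) A).leaves.Perm (PTree.node (.node A B) C).leaves := by
    simpa only [leaves, List.append_assoc] using
      (List.perm_append_comm (l₁ := B.leaves ++ C.leaves) (l₂ := A.leaves))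
  have hCAB : (PTree.node (.node C A) B).leaves.Perm (PTree.node (.node A B) C).leaves := by
    simpa only [leaves, List.append_assoc] using
      (List.perm_append_comm (l₁ := C.leaves) (l₂ := A.leaves ++ B.leaves))
  simp only [TreeOn.pairPT_eq_ite]
  split_ifs
  · rw [h₁, h₂, h₃, hc _ (.refl _), hc _ hBCA, hc _ hCAB]
    linear_combination c * crossingProd_jacobi E A B C
  · rfl

theorem pairPT_graft_symm (E : Multiset (ℕ × ℕ)) {D A B : PTree} {m : ℕ} {T₁ T₂ : TreeOn S}
    (hD : D.leaves.Nodup) (hm : m ∈ D.leaves) (h₁ : T₁.1 = D.graft m (.node A B))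
    (h₂ : T₂.1 = D.graft m (.node B A)) : pairPT E T₁.1 + pairPT E T₂.1 = 0 := by
  obtain ⟨c, hc⟩ := exists_crossingProd_graft_eq_mul E hD hm (.node A B)
  simp only [TreeOn.pairPT_eq_ite]
  split_ifs
  · rw [h₁, h₂, hc _ (.refl _), hc _ List.perm_append_comm, crossingProd_node_swap]
    ring
  · rfl

variable {R : Type} [CommRing R]

/-- The linear functional on `Θ_S` given by the configuration pairing with a fixed set of edges. -/
def pairFunctional (E : Multiset (ℕ × ℕ)) : ThetaF R S →ₗ[R] R :=
  Finsupp.linearCombination R fun T => ((pairPT E T.1 : ℤ) : R)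

theorem pairFunctional_single (E : Multiset (ℕ × ℕ)) (T : TreeOn S) :
    pairFunctional E (Finsupp.single T 1 : ThetaF R S) = ((pairPT E T.1 : ℤ) : R) := by
  rw [pairFunctional, Finsupp.linearCombination_single, one_smul]

theorem pairGT_eq_sum_pairFunctional (β : GammaF R S) (α : ThetaF R S) :
    pairGT β α = β.sum fun G b => b * pairFunctional G.1 α := by
  simp only [pairGT, pairFunctional, Finsupp.linearCombination_apply, Finsupp.mul_sum, smul_eq_mul,
    mul_assoc]

theorem Jsub_le_ker_pairFunctional (E : Multiset (ℕ × ℕ)) :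
    Jsub R S ≤ LinearMap.ker (pairFunctional E) := by
  refine Submodule.span_le.2 ?_
  rintro x (⟨D, A, B, C, m, T₁, T₂, T₃, hD, hm, h₁, h₂, h₃, rfl⟩ |
    ⟨D, A, B, m, T₁, T₂, hD, hm, h₁, h₂, rfl⟩)
  · rw [SetLike.mem_coe, LinearMap.mem_ker, map_add, map_add]
    simp only [pairFunctional_single]
    exact_mod_cast congrArg (Int.cast (R := R)) (pairPT_graft_jacobi E hD hm h₁ h₂ h₃)
  · rw [SetLike.mem_coe, LinearMap.mem_ker, map_add]
    simp only [pairFunctional_single]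
    exact_mod_cast congrArg (Int.cast (R := R)) (pairPT_graft_symm E hD hm h₁ h₂)

theorem pairing_vanishes_on_J_general {α : ThetaF R S} (hα : α ∈ Jsub R S) (β : GammaF R S) :
    pairGT β α = 0 := by
  rw [pairGT_eq_sum_pairFunctional]
  exact Finset.sum_eq_zero fun G _ => mul_eq_zero_of_right _ (Jsub_le_ker_pairFunctional G.1 hα)

end Relations

/-- the configuration pairing vanishes on the submodule `J_n ⊆ Θ_n`
generated by Jacobi combinations and symmetry combinations of Trees. -/
theorem pairing_vanishes_on_J (R : Type) [CommRing R] (n : ℕ)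
    (α : ThetaF R (Finset.range n)) (hα : α ∈ Jsub R (Finset.range n))
    (β : GammaF R (Finset.range n)) :
    pairGT β α = 0 :=
  pairing_vanishes_on_J_general hα β

end GTPairing
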